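/- arXiv:2007.06184 — 2 statements merged into one kernel-verified Lean document; each statement's English description precedes it below -/
import Mathlib

section
/- Under the feature and core-state assumptions, for every action distribution π ∈ Δ_𝒜, define q†(π) := Σ_{a∈𝒜} π(a)·r_{s₀a} + V_LRALP(γμ_π) with μ_πᵀ = Σ_{a∈𝒜} π(a)·P_{s₀a}, and q*(s₀,π) := Σ_{a∈𝒜} π(a)·q*(s₀,a). Then |q†(π) − q*(s₀,π)| ≤ 10γ·ε_approx/(1−γ). -/
/-!
Every backup operator `T` in sight satisfies `u ≤ w + k → T u ≤ T w + γ k`, and on a finite state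
space such an operator obeys a perturbed comparison principle: `u ≤ T u + δ` and `T w ≤ w` imply
`u ≤ w + δ / (1 - γ)`. With `δ = 0` this gives the Bellman equation for `v*`.

Suppose now that `|v* - Φθ| ≤ e`. Shifting `Φθ` by a multiple of `1 = Φη` makes `θ` feasible at the
cost of an error `2e / (1 - γ)`. Conversely, let `T` be the average, with the weights `Z`, of
Bellman backups at the core states. Since `Φ = ZΦ*`, every feasible `θ'` satisfies `T(Φθ') ≤ Φθ'`,
while `v* ≤ T v* + 2e` because `v*` is within `e` of `Φθ`; hence `v* ≤ Φθ' + 2e / (1 - γ)`.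
-/

open scoped BigOperators

namespace MDPPlan

variable {S A : Type} [Fintype S] [Fintype A] [DecidableEq S] {d m : ℕ}

/-- `φ_sᵀθ`: dot product of the feature vector of state `s` with weights `θ`. -/
noncomputable def phiDot (Φ : S → Fin d → ℝ) (θ : Fin d → ℝ) (s : S) : ℝ :=
  ∑ j, Φ s j * θ j

/-- The sequence `𝒮₊ = (s₀, s₁, …, s_m)`: `none` is the planning state `s₀`,
`some i` is the `i`-th core state. -/
def splus (s₀ : S) (c : Fin m → S) : Option (Fin m) → S := fun o => o.elim s₀ c

/-- State-transition matrix `P_π` of a stationary policy `π`. -/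
noncomputable def Ppi (P : S → A → S → ℝ) (π : S → A → ℝ) : Matrix S S ℝ :=
  Matrix.of fun s s' => ∑ a, π s a * P s a s'

/-- Expected reward `r_π` of a stationary policy `π`. -/
noncomputable def rpi (r : S → A → ℝ) (π : S → A → ℝ) : S → ℝ :=
  fun s => ∑ a, π s a * r s a

/-- `π` is a stationary policy: each `π(·|s)` is a probability distribution over actions. -/
def IsPolicy (π : S → A → ℝ) : Prop := (∀ s a, 0 ≤ π s a) ∧ ∀ s, ∑ a, π s a = 1

/-- Value function `v_π = Σ_{t≥0} (γ P_π)^t r_π`. -/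
noncomputable def vpi (γ : ℝ) (P : S → A → S → ℝ) (r : S → A → ℝ) (π : S → A → ℝ) :
    S → ℝ :=
  ∑' t : ℕ, ((γ • Ppi P π) ^ t).mulVec (rpi r π)

/-- Optimal value function `v*(s) = sup_π v_π(s)`. -/
noncomputable def vstar (γ : ℝ) (P : S → A → S → ℝ) (r : S → A → ℝ) : S → ℝ :=
  fun s => ⨆ π : {π : S → A → ℝ // IsPolicy π}, vpi γ P r π.1 s

/-- Optimal action-value function `q*(s,a) = r_{sa} + γ P_{sa} v*`. -/
noncomputable def qstar (γ : ℝ) (P : S → A → S → ℝ) (r : S → A → ℝ) (s : S) (a : A) : ℝ :=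
  r s a + γ * ∑ s', P s a s' * vstar γ P r s'

/-- `ε_approx = inf_θ max_s |v*(s) − φ_sᵀθ|`. -/
noncomputable def epsApprox (Φ : S → Fin d → ℝ) (v : S → ℝ) : ℝ :=
  ⨅ θ : Fin d → ℝ, ⨆ s : S, |v s - phiDot Φ θ s|

/-- Membership in `Λ`: nonnegative and the `s₀`-block sums to one. -/
def InLambda (lam : Option (Fin m) × A → ℝ) : Prop :=
  (∀ p, 0 ≤ lam p) ∧ ∑ a, lam (none, a) = 1

/-- The CoreLP equality constraint `φ_{s₀}ᵀ + λᵀW(γP − E)Φ = 0ᵀ`. -/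
def CoreLPConstraint (γ : ℝ) (P : S → A → S → ℝ) (Φ : S → Fin d → ℝ) (s₀ : S)
    (c : Fin m → S) (lam : Option (Fin m) × A → ℝ) : Prop :=
  ∀ j : Fin d, Φ s₀ j + ∑ p : Option (Fin m) × A,
    lam p * (γ * (∑ s', P (splus s₀ c p.1) p.2 s' * Φ s' j) - Φ (splus s₀ c p.1) j) = 0

/-- The CoreLP objective `λᵀWr`. -/
noncomputable def CoreLPObj (r : S → A → ℝ) (s₀ : S) (c : Fin m → S)
    (lam : Option (Fin m) × A → ℝ) : ℝ :=
  ∑ p : Option (Fin m) × A, lam p * r (splus s₀ c p.1) p.2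

/-- The optimal value `V†` of CoreLP. -/
noncomputable def Vdagger (γ : ℝ) (P : S → A → S → ℝ) (r : S → A → ℝ)
    (Φ : S → Fin d → ℝ) (s₀ : S) (c : Fin m → S) : ℝ :=
  sSup {x : ℝ | ∃ lam : Option (Fin m) × A → ℝ,
    InLambda lam ∧ CoreLPConstraint γ P Φ s₀ c lam ∧ x = CoreLPObj r s₀ c lam}

/-- Feasibility for LRALP: `W*r + W*(γP − E)Φθ ≤ 0`. -/
def LRALPFeasible (γ : ℝ) (P : S → A → S → ℝ) (r : S → A → ℝ) (Φ : S → Fin d → ℝ)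
    (c : Fin m → S) (θ : Fin d → ℝ) : Prop :=
  ∀ (i : Fin m) (a : A),
    r (c i) a + (γ * (∑ s', P (c i) a s' * phiDot Φ θ s') - phiDot Φ θ (c i)) ≤ 0

/-- `V_LRALP(μ) = min { μᵀΦθ : θ feasible for LRALP }`. -/
noncomputable def VLRALP (γ : ℝ) (P : S → A → S → ℝ) (r : S → A → ℝ) (Φ : S → Fin d → ℝ)
    (c : Fin m → S) (μ : S → ℝ) : ℝ :=
  sInf {x : ℝ | ∃ θ : Fin d → ℝ, LRALPFeasible γ P r Φ c θ ∧ x = ∑ s, μ s * phiDot Φ θ s}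

/-- The Saddle CoreLP objective `f(λ,θ) = λᵀWr + φ_{s₀}ᵀθ + λᵀW(γP − E)Φθ`. -/
noncomputable def fObj (γ : ℝ) (P : S → A → S → ℝ) (r : S → A → ℝ) (Φ : S → Fin d → ℝ)
    (s₀ : S) (c : Fin m → S) (lam : Option (Fin m) × A → ℝ) (θ : Fin d → ℝ) : ℝ :=
  CoreLPObj r s₀ c lam + phiDot Φ θ s₀ +
    ∑ p : Option (Fin m) × A,
      lam p * (γ * (∑ s', P (splus s₀ c p.1) p.2 s' * phiDot Φ θ s') -
        phiDot Φ θ (splus s₀ c p.1))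

/-- The Saddle LRALP objective `g_μ(λ*,θ) = λ*ᵀW*r + μᵀΦθ + λ*ᵀW*(γP − E)Φθ`. -/
noncomputable def gObj (γ : ℝ) (P : S → A → S → ℝ) (r : S → A → ℝ) (Φ : S → Fin d → ℝ)
    (c : Fin m → S) (μ : S → ℝ) (lamS : Fin m × A → ℝ) (θ : Fin d → ℝ) : ℝ :=
  (∑ p : Fin m × A, lamS p * r (c p.1) p.2) + (∑ s, μ s * phiDot Φ θ s) +
    ∑ p : Fin m × A,
      lamS p * (γ * (∑ s', P (c p.1) p.2 s' * phiDot Φ θ s') - phiDot Φ θ (c p.1))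

/-- The `𝓑`-bounded duality gap `δ_𝓑(λ̂,θ̂) = max_{λ∈Λ_γ} f(λ,θ̂) − inf_{θ∈𝓑} f(λ̂,θ)`. -/
noncomputable def dualityGap (γ : ℝ) (P : S → A → S → ℝ) (r : S → A → ℝ)
    (Φ : S → Fin d → ℝ) (s₀ : S) (c : Fin m → S) (Bset : Set (Fin d → ℝ))
    (lamHat : Option (Fin m) × A → ℝ) (θHat : Fin d → ℝ) : ℝ :=
  sSup {x : ℝ | ∃ lam : Option (Fin m) × A → ℝ,
      InLambda lam ∧ (∑ p, |lam p|) = 1 / (1 - γ) ∧ x = fObj γ P r Φ s₀ c lam θHat} -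
    sInf {x : ℝ | ∃ θ ∈ Bset, x = fObj γ P r Φ s₀ c lamHat θ}

section Discounted

lemma sum_mul_le_sum_mul_add {ι : Type*} [Fintype ι] {p x y : ι → ℝ} {e : ℝ}
    (hp : ∀ i, 0 ≤ p i) (hxy : ∀ i, x i ≤ y i + e) :
    ∑ i, p i * x i ≤ ∑ i, p i * y i + (∑ i, p i) * e := by
  rw [Finset.sum_mul, ← Finset.sum_add_distrib]
  refine Finset.sum_le_sum fun i _ => ?_
  rw [← mul_add]
  exact mul_le_mul_of_nonneg_left (hxy i) (hp i)

/-- A functional on value functions satisfying Blackwell's two conditions (monotonicity and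
discounting of constants by `γ`), merged into a single implication. An operator is discounted when
each of its components is. -/
def IsDiscounted {S : Type*} (γ : ℝ) (f : (S → ℝ) → ℝ) : Prop :=
  ∀ ⦃u w : S → ℝ⦄ ⦃k : ℝ⦄, (∀ s, u s ≤ w s + k) → f u ≤ f w + γ * k

namespace IsDiscounted

variable {S ι : Type*} {γ : ℝ}

lemma sum_mul [Fintype ι] {p : ι → ℝ} {f : ι → (S → ℝ) → ℝ} (hp : p ∈ stdSimplex ℝ ι)
    (hf : ∀ i, IsDiscounted γ (f i)) : IsDiscounted γ fun v => ∑ i, p i * f i v := by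
  intro u w k huw
  simpa only [hp.2, one_mul] using sum_mul_le_sum_mul_add hp.1 fun i => hf i huw

lemma iSup [Finite ι] [Nonempty ι] {f : ι → (S → ℝ) → ℝ} (hf : ∀ i, IsDiscounted γ (f i)) :
    IsDiscounted γ fun v => ⨆ i, f i v := fun _ w _ huw =>
  ciSup_le fun i => (hf i huw).trans <|
    add_le_add_left (le_ciSup (Set.finite_range fun i => f i w).bddAbove i) _

lemma contractingWith [Fintype S] {T : (S → ℝ) → S → ℝ} (hγ0 : 0 ≤ γ) (hγ1 : γ < 1)
    (hT : ∀ s, IsDiscounted γ (T · s)) : ContractingWith ⟨γ, hγ0⟩ T := by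
  refine ⟨by exact_mod_cast hγ1, LipschitzWith.of_dist_le_mul fun u w => ?_⟩
  have le_add_dist (x y : S → ℝ) (s : S) : x s ≤ y s + dist x y :=
    sub_le_iff_le_add'.1 <| (le_abs_self _).trans <| dist_le_pi_dist x y s
  refine (dist_pi_le_iff (by positivity)).2 fun s => abs_sub_le_iff.2 ⟨?_, ?_⟩
  · exact sub_le_iff_le_add'.2 (hT s (le_add_dist u w))
  · rw [dist_comm]
    exact sub_le_iff_le_add'.2 (hT s (le_add_dist w u))

lemma le_add_div_of_le_of_le [Finite S] {T : (S → ℝ) → S → ℝ} {u w : S → ℝ} {δ : ℝ} (hγ1 : γ < 1)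
    (hT : ∀ s, IsDiscounted γ (T · s)) (hu : ∀ s, u s ≤ T u s + δ) (hw : T w ≤ w) (s : S) :
    u s ≤ w s + δ / (1 - γ) := by
  have : Nonempty S := ⟨s⟩
  obtain ⟨t, ht⟩ := Finite.exists_max fun s => u s - w s
  have hTt : T u t ≤ T w t + γ * (u t - w t) :=
    hT t fun s => sub_le_iff_le_add'.1 (ht s)
  have hgap : u t - w t ≤ δ / (1 - γ) := by
    rw [le_div_iff₀ (sub_pos.2 hγ1)]
    linarith [hu t, hw t]
  linarith [ht s]

lemma le_of_le_of_le [Finite S] {T : (S → ℝ) → S → ℝ} {u w : S → ℝ} (hγ1 : γ < 1)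
    (hT : ∀ s, IsDiscounted γ (T · s)) (hu : u ≤ T u) (hw : T w ≤ w) : u ≤ w := fun s => by
  simpa only [zero_div, add_zero] using
    le_add_div_of_le_of_le hγ1 hT (fun s => (hu s).trans_eq (add_zero _).symm) hw s

end IsDiscounted

end Discounted

section GeometricSeries

variable {S : Type*} [Fintype S] [DecidableEq S]

section

attribute [local instance] Matrix.linftyOpNormedRing Matrix.linftyOpNormedAlgebra

lemma summable_pow_smul_of_mem_stdSimplex {γ : ℝ} (hγ0 : 0 ≤ γ) (hγ1 : γ < 1)
    {Q : Matrix S S ℝ} (hQ : ∀ s, Q s ∈ stdSimplex ℝ S) :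
    Summable fun t : ℕ => (γ • Q) ^ t := by
  have hrow (s : S) : ∑ s', ‖Q s s'‖₊ = 1 := by
    ext
    push_cast
    simp only [Real.norm_of_nonneg ((hQ s).1 _), (hQ s).2]
  have hnorm : ‖Q‖ ≤ 1 := by
    rw [Matrix.linfty_opNorm_def]
    exact_mod_cast Finset.sup_le fun s _ => (hrow s).le
  refine summable_geometric_of_norm_lt_one ?_
  calc ‖γ • Q‖ = γ * ‖Q‖ := by rw [norm_smul, Real.norm_of_nonneg hγ0]
    _ ≤ γ := mul_le_of_le_one_right hγ0 hnorm
    _ < 1 := hγ1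

end

lemma tsum_pow_mulVec {M : Matrix S S ℝ} (hM : Summable fun t : ℕ => M ^ t)
    (x : S → ℝ) : ∑' t : ℕ, (M ^ t).mulVec x = x + M.mulVec (∑' t : ℕ, (M ^ t).mulVec x) := by
  have hx : Summable fun t : ℕ => (M ^ t).mulVec x :=
    hM.map ((Matrix.mulVecBilin ℝ ℝ).flip x) (by fun_prop)
  have hcomm : M.mulVec (∑' t : ℕ, (M ^ t).mulVec x) = ∑' t : ℕ, M.mulVec ((M ^ t).mulVec x) :=
    hx.map_tsum (Matrix.mulVecLin M) (by fun_prop)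
  rw [hcomm, hx.tsum_eq_zero_add]
  simp only [pow_zero, Matrix.one_mulVec, pow_succ', Matrix.mulVec_mulVec]

end GeometricSeries

section Bellman

variable {S A : Type} [Fintype S] {γ : ℝ} {P : S → A → S → ℝ} {r : S → A → ℝ} {v : S → ℝ}

/-- The one-step lookahead `r_{sa} + γ P_{sa} v`; `qstar` is its value at `v = v*`. -/
noncomputable def actionValue (γ : ℝ) (P : S → A → S → ℝ) (r : S → A → ℝ) (v : S → ℝ)
    (s : S) (a : A) : ℝ :=
  r s a + γ * ∑ s', P s a s' * v s'

/-- The Bellman evaluation operator of a policy `π`, whose fixed point is `v_π`. -/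
noncomputable def policyBackup [Fintype A] (γ : ℝ) (P : S → A → S → ℝ) (r : S → A → ℝ)
    (π : S → A → ℝ) (v : S → ℝ) (s : S) : ℝ :=
  ∑ a, π s a * actionValue γ P r v s a

/-- The Bellman optimality operator, whose fixed point is `v*`. -/
noncomputable def bellman (γ : ℝ) (P : S → A → S → ℝ) (r : S → A → ℝ) (v : S → ℝ) (s : S) : ℝ :=
  ⨆ a, actionValue γ P r v s a

lemma actionValue_le_bellman [Finite A] (s : S) (a : A) :
    actionValue γ P r v s a ≤ bellman γ P r v s :=
  le_ciSup (Set.finite_range (actionValue γ P r v s)).bddAbove a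

lemma policyBackup_le_bellman [Fintype A] {π : S → A → ℝ} (hπ : IsPolicy π) :
    policyBackup γ P r π v ≤ bellman γ P r v := fun s => by
  calc policyBackup γ P r π v s ≤ ∑ a, π s a * bellman γ P r v s :=
        Finset.sum_le_sum fun a _ =>
          mul_le_mul_of_nonneg_left (actionValue_le_bellman s a) (hπ.1 s a)
    _ = bellman γ P r v s := by rw [← Finset.sum_mul, hπ.2, one_mul]

lemma isDiscounted_actionValue (hγ0 : 0 ≤ γ) (hP : ∀ s a, P s a ∈ stdSimplex ℝ S) (s : S)
    (a : A) : IsDiscounted γ (actionValue γ P r · s a) := by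
  intro u w k huw
  have hsum := sum_mul_le_sum_mul_add (hP s a).1 huw
  rw [(hP s a).2, one_mul] at hsum
  simpa only [actionValue, add_assoc, ← mul_add] using
    add_le_add_right (mul_le_mul_of_nonneg_left hsum hγ0) (r s a)

lemma isDiscounted_policyBackup [Fintype A] {π : S → A → ℝ} (hγ0 : 0 ≤ γ)
    (hP : ∀ s a, P s a ∈ stdSimplex ℝ S) (hπ : IsPolicy π) (s : S) :
    IsDiscounted γ (policyBackup γ P r π · s) :=
  .sum_mul ⟨hπ.1 s, hπ.2 s⟩ fun a => isDiscounted_actionValue hγ0 hP s a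

lemma isDiscounted_bellman [Finite A] [Nonempty A] (hγ0 : 0 ≤ γ)
    (hP : ∀ s a, P s a ∈ stdSimplex ℝ S) (s : S) : IsDiscounted γ (bellman γ P r · s) :=
  .iSup fun a => isDiscounted_actionValue hγ0 hP s a

lemma exists_isPolicy_policyBackup_eq_bellman [Fintype A] [Nonempty A] (γ : ℝ)
    (P : S → A → S → ℝ) (r : S → A → ℝ) (v : S → ℝ) :
    ∃ π : S → A → ℝ, IsPolicy π ∧ policyBackup γ P r π v = bellman γ P r v := by
  classical
  choose g hg using fun s => exists_eq_ciSup_of_finite (f := actionValue γ P r v s)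
  have hsimplex (s : S) : Pi.single (g s) 1 ∈ stdSimplex ℝ A := single_mem_stdSimplex ℝ (g s)
  refine ⟨fun s => Pi.single (g s) 1, ⟨fun s => (hsimplex s).1, fun s => (hsimplex s).2⟩, ?_⟩
  funext s
  simpa only [policyBackup, bellman, Pi.single_apply, ite_mul, one_mul, zero_mul,
    Finset.sum_ite_eq', Finset.mem_univ, if_true] using hg s

end Bellman

section Policy

variable {S A : Type} [Fintype S] [Fintype A] {γ : ℝ} {P : S → A → S → ℝ} {r : S → A → ℝ}
  {π : S → A → ℝ}

lemma policyBackup_eq_rpi_add (v : S → ℝ) (s : S) :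
    policyBackup γ P r π v s = rpi r π s + γ * ∑ s', Ppi P π s s' * v s' := by
  simp only [policyBackup, actionValue, rpi, Ppi, Matrix.of_apply, mul_add,
    Finset.sum_add_distrib, Finset.mul_sum, Finset.sum_mul]
  rw [Finset.sum_comm (γ := A)]
  congr! 3 with a _ s'
  ring

lemma Ppi_mem_stdSimplex (hP : ∀ s a, P s a ∈ stdSimplex ℝ S) (hπ : IsPolicy π) (s : S) :
    Ppi P π s ∈ stdSimplex ℝ S := by
  refine ⟨fun s' => Finset.sum_nonneg fun a _ => mul_nonneg (hπ.1 s a) ((hP s a).1 s'), ?_⟩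
  simp only [Ppi, Matrix.of_apply]
  rw [Finset.sum_comm]
  simp only [← Finset.mul_sum, (hP s _).2, mul_one, hπ.2]

lemma policyBackup_vpi [DecidableEq S] (hγ0 : 0 ≤ γ) (hγ1 : γ < 1)
    (hP : ∀ s a, P s a ∈ stdSimplex ℝ S) (hπ : IsPolicy π) :
    policyBackup γ P r π (vpi γ P r π) = vpi γ P r π := by
  have hM := summable_pow_smul_of_mem_stdSimplex hγ0 hγ1 (Ppi_mem_stdSimplex hP hπ)
  have hvpi : vpi γ P r π = rpi r π + (γ • Ppi P π).mulVec (vpi γ P r π) := tsum_pow_mulVec hM _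
  funext s
  conv_rhs => rw [hvpi]
  rw [policyBackup_eq_rpi_add, Matrix.smul_mulVec]
  rfl

lemma vpi_le_of_bellman_le [DecidableEq S] [Nonempty A] {v : S → ℝ} (hγ0 : 0 ≤ γ) (hγ1 : γ < 1)
    (hP : ∀ s a, P s a ∈ stdSimplex ℝ S) (hπ : IsPolicy π) (hv : bellman γ P r v ≤ v) :
    vpi γ P r π ≤ v :=
  IsDiscounted.le_of_le_of_le hγ1 (isDiscounted_bellman hγ0 hP)
    ((policyBackup_vpi hγ0 hγ1 hP hπ).ge.trans (policyBackup_le_bellman hπ)) hv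

lemma exists_isPolicy_le_vpi_of_le_bellman [DecidableEq S] [Nonempty A] {v : S → ℝ}
    (hγ0 : 0 ≤ γ) (hγ1 : γ < 1) (hP : ∀ s a, P s a ∈ stdSimplex ℝ S)
    (hv : v ≤ bellman γ P r v) : ∃ π : S → A → ℝ, IsPolicy π ∧ v ≤ vpi γ P r π := by
  obtain ⟨π, hπ, hgreedy⟩ := exists_isPolicy_policyBackup_eq_bellman γ P r v
  exact ⟨π, hπ, IsDiscounted.le_of_le_of_le hγ1 (isDiscounted_policyBackup hγ0 hP hπ)
    (hv.trans hgreedy.ge) (policyBackup_vpi hγ0 hγ1 hP hπ).le⟩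

lemma vstar_eq_of_bellman_eq [DecidableEq S] [Nonempty A] {v : S → ℝ} (hγ0 : 0 ≤ γ)
    (hγ1 : γ < 1) (hP : ∀ s a, P s a ∈ stdSimplex ℝ S) (hv : bellman γ P r v = v) :
    vstar γ P r = v := by
  obtain ⟨π, hπ, hvπ⟩ := exists_isPolicy_le_vpi_of_le_bellman hγ0 hγ1 hP hv.ge
  have hle (π' : {π : S → A → ℝ // IsPolicy π}) : vpi γ P r π' ≤ v :=
    vpi_le_of_bellman_le hγ0 hγ1 hP π'.2 hv.le
  have : Nonempty {π : S → A → ℝ // IsPolicy π} := ⟨⟨π, hπ⟩⟩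
  funext s
  have hbdd : BddAbove (Set.range fun π' : {π : S → A → ℝ // IsPolicy π} => vpi γ P r π' s) :=
    ⟨v s, Set.forall_mem_range.2 fun π' => hle π' s⟩
  exact le_antisymm (ciSup_le fun π' => hle π' s) ((hvπ s).trans (le_ciSup hbdd ⟨π, hπ⟩))

theorem bellman_vstar [DecidableEq S] [Nonempty A] (hγ0 : 0 ≤ γ) (hγ1 : γ < 1)
    (hP : ∀ s a, P s a ∈ stdSimplex ℝ S) : bellman γ P r (vstar γ P r) = vstar γ P r := by
  have hT : ContractingWith ⟨γ, hγ0⟩ (bellman γ P r) :=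
    IsDiscounted.contractingWith hγ0 hγ1 (isDiscounted_bellman hγ0 hP)
  have hfix : bellman γ P r (hT.fixedPoint _) = hT.fixedPoint _ := hT.fixedPoint_isFixedPt
  rwa [vstar_eq_of_bellman_eq hγ0 hγ1 hP hfix]

end Policy

section LRALP

variable {S A : Type} {γ e : ℝ} {P : S → A → S → ℝ} {r : S → A → ℝ} {v μ : S → ℝ}
  {Φ : S → Fin d → ℝ} {c : Fin m → S} {Z : S → Fin m → ℝ} {θ θ' η : Fin d → ℝ}

lemma phiDot_add_smul (Φ : S → Fin d → ℝ) (θ η : Fin d → ℝ) (k : ℝ) (s : S) :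
    phiDot Φ (θ + k • η) s = phiDot Φ θ s + k * phiDot Φ η s := by
  simp only [phiDot, Pi.add_apply, Pi.smul_apply, smul_eq_mul, mul_add, mul_left_comm _ k,
    Finset.sum_add_distrib, Finset.mul_sum]

lemma phiDot_eq_sum_core (hΦ : ∀ s j, Φ s j = ∑ i, Z s i * Φ (c i) j) (θ : Fin d → ℝ) (s : S) :
    phiDot Φ θ s = ∑ i, Z s i * phiDot Φ θ (c i) := by
  simp only [phiDot, hΦ s, Finset.sum_mul, Finset.mul_sum, mul_assoc]
  exact Finset.sum_comm

lemma mem_stdSimplex_of_core (hZ : ∀ s i, 0 ≤ Z s i)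
    (hΦ : ∀ s j, Φ s j = ∑ i, Z s i * Φ (c i) j) (hη : ∀ s, phiDot Φ η s = 1) (s : S) :
    Z s ∈ stdSimplex ℝ (Fin m) := by
  refine ⟨hZ s, ?_⟩
  simpa only [hη, mul_one] using (phiDot_eq_sum_core hΦ η s).symm

lemma epsApprox_nonneg (Φ : S → Fin d → ℝ) (v : S → ℝ) : 0 ≤ epsApprox Φ v :=
  Real.iInf_nonneg fun _ => Real.iSup_nonneg fun _ => abs_nonneg _

variable [Fintype S]

lemma LRALPFeasible_iff_actionValue_le :
    LRALPFeasible γ P r Φ c θ ↔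
      ∀ i a, actionValue γ P r (phiDot Φ θ) (c i) a ≤ phiDot Φ θ (c i) := by
  simp only [LRALPFeasible, actionValue, ← add_sub_assoc, sub_nonpos]

/-- The Bellman backups at the core states, averaged with the weights `Z`. It extends the LRALP
constraints from the core states to all states. -/
noncomputable def coreBellman (γ : ℝ) (P : S → A → S → ℝ) (r : S → A → ℝ) (c : Fin m → S)
    (Z : S → Fin m → ℝ) (v : S → ℝ) (s : S) : ℝ :=
  ∑ i, Z s i * bellman γ P r v (c i)

lemma isDiscounted_coreBellman [Finite A] [Nonempty A] (hγ0 : 0 ≤ γ)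
    (hP : ∀ s a, P s a ∈ stdSimplex ℝ S) (hZ : ∀ s, Z s ∈ stdSimplex ℝ (Fin m)) (s : S) :
    IsDiscounted γ (coreBellman γ P r c Z · s) :=
  .sum_mul (hZ s) fun i => isDiscounted_bellman hγ0 hP (c i)

lemma LRALPFeasible.coreBellman_le [Nonempty A] (hθ : LRALPFeasible γ P r Φ c θ)
    (hZ : ∀ s i, 0 ≤ Z s i) (hΦ : ∀ s j, Φ s j = ∑ i, Z s i * Φ (c i) j) :
    coreBellman γ P r c Z (phiDot Φ θ) ≤ phiDot Φ θ := fun s => by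
  rw [phiDot_eq_sum_core hΦ θ s]
  exact Finset.sum_le_sum fun i _ => mul_le_mul_of_nonneg_left
    (ciSup_le (LRALPFeasible_iff_actionValue_le.1 hθ i)) (hZ s i)

lemma le_coreBellman_add (hZ : ∀ s, Z s ∈ stdSimplex ℝ (Fin m))
    (hΦ : ∀ s j, Φ s j = ∑ i, Z s i * Φ (c i) j) (hv : v ≤ bellman γ P r v)
    (hθ : ∀ s, |v s - phiDot Φ θ s| ≤ e) (s : S) : v s ≤ coreBellman γ P r c Z v s + 2 * e := by
  have hcore (i : Fin m) : phiDot Φ θ (c i) ≤ bellman γ P r v (c i) + e := by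
    linarith [hv (c i), neg_le_of_abs_le (hθ (c i))]
  have havg : phiDot Φ θ s ≤ coreBellman γ P r c Z v s + e := by
    simpa only [coreBellman, phiDot_eq_sum_core hΦ θ s, (hZ s).2, one_mul] using
      sum_mul_le_sum_mul_add (hZ s).1 hcore
  linarith [le_of_abs_le (hθ s)]

lemma LRALPFeasible.le_phiDot_add [Finite A] [Nonempty A] (hθ' : LRALPFeasible γ P r Φ c θ')
    (hγ0 : 0 ≤ γ) (hγ1 : γ < 1) (hP : ∀ s a, P s a ∈ stdSimplex ℝ S)
    (hZ : ∀ s, Z s ∈ stdSimplex ℝ (Fin m)) (hΦ : ∀ s j, Φ s j = ∑ i, Z s i * Φ (c i) j)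
    (hv : v ≤ bellman γ P r v) (hθ : ∀ s, |v s - phiDot Φ θ s| ≤ e) (s : S) :
    v s ≤ phiDot Φ θ' s + 2 * e / (1 - γ) :=
  IsDiscounted.le_add_div_of_le_of_le hγ1 (isDiscounted_coreBellman hγ0 hP hZ)
    (le_coreBellman_add hZ hΦ hv hθ) (hθ'.coreBellman_le (fun s => (hZ s).1) hΦ) s

lemma exists_LRALPFeasible_phiDot_le [Finite A] (c : Fin m → S) (hγ0 : 0 ≤ γ) (hγ1 : γ < 1)
    (hP : ∀ s a, P s a ∈ stdSimplex ℝ S) (hη : ∀ s, phiDot Φ η s = 1)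
    (hv : bellman γ P r v ≤ v) (hθ : ∀ s, |v s - phiDot Φ θ s| ≤ e) :
    ∃ θ', LRALPFeasible γ P r Φ c θ' ∧ ∀ s, phiDot Φ θ' s ≤ v s + 2 * e / (1 - γ) := by
  have hγ : 1 - γ ≠ 0 := (sub_pos.2 hγ1).ne'
  set k := (1 + γ) * e / (1 - γ) with hk
  have hshift (s : S) : phiDot Φ (θ + k • η) s = phiDot Φ θ s + k := by
    rw [phiDot_add_smul, hη, mul_one]
  have hle (s : S) : phiDot Φ (θ + k • η) s ≤ v s + (e + k) := by
    linarith [hshift s, neg_le_of_abs_le (hθ s)]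
  have hek : e + k = 2 * e / (1 - γ) := by rw [hk]; field_simp; ring
  have hkfix : e + γ * (e + k) = k := by rw [hk]; field_simp; ring
  refine ⟨θ + k • η, LRALPFeasible_iff_actionValue_le.2 fun i a => ?_, hek ▸ hle⟩
  calc actionValue γ P r (phiDot Φ (θ + k • η)) (c i) a
      ≤ actionValue γ P r v (c i) a + γ * (e + k) := isDiscounted_actionValue hγ0 hP _ _ hle
    _ ≤ v (c i) + γ * (e + k) := by gcongr; exact (actionValue_le_bellman _ _).trans (hv _)
    _ ≤ phiDot Φ θ (c i) + k := by linarith [le_of_abs_le (hθ (c i))]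
    _ = phiDot Φ (θ + k • η) (c i) := (hshift _).symm

lemma abs_VLRALP_sub_le_of_abs_sub_le [Finite A] [Nonempty A] (hγ0 : 0 ≤ γ) (hγ1 : γ < 1)
    (hP : ∀ s a, P s a ∈ stdSimplex ℝ S) (hη : ∀ s, phiDot Φ η s = 1)
    (hZ : ∀ s i, 0 ≤ Z s i) (hΦ : ∀ s j, Φ s j = ∑ i, Z s i * Φ (c i) j) (hμ : ∀ s, 0 ≤ μ s)
    (hv : bellman γ P r v = v) (hθ : ∀ s, |v s - phiDot Φ θ s| ≤ e) :
    |VLRALP γ P r Φ c μ - ∑ s, μ s * v s| ≤ (∑ s, μ s) * (2 * e / (1 - γ)) := by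
  obtain ⟨θ₁, hθ₁, hle⟩ := exists_LRALPFeasible_phiDot_le c hγ0 hγ1 hP hη hv.le hθ
  have hupper := sum_mul_le_sum_mul_add hμ hle
  have hlower : (∑ s, μ s * v s) - (∑ s, μ s) * (2 * e / (1 - γ)) ∈ lowerBounds
      {x | ∃ θ, LRALPFeasible γ P r Φ c θ ∧ x = ∑ s, μ s * phiDot Φ θ s} := by
    rintro _ ⟨θ', hθ', rfl⟩
    exact sub_le_iff_le_add.2 <| sum_mul_le_sum_mul_add hμ <|
      hθ'.le_phiDot_add hγ0 hγ1 hP (mem_stdSimplex_of_core hZ hΦ hη) hΦ hv.ge hθ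
  refine abs_sub_le_iff.2 ⟨?_, ?_⟩
  · exact sub_le_iff_le_add'.2 ((csInf_le ⟨_, hlower⟩ ⟨θ₁, hθ₁, rfl⟩).trans hupper)
  · exact sub_le_comm.1 (le_csInf ⟨_, θ₁, hθ₁, rfl⟩ hlower)

theorem abs_VLRALP_sub_le [Finite A] [Nonempty A] (hγ0 : 0 ≤ γ) (hγ1 : γ < 1)
    (hP : ∀ s a, P s a ∈ stdSimplex ℝ S) (hη : ∀ s, phiDot Φ η s = 1)
    (hZ : ∀ s i, 0 ≤ Z s i) (hΦ : ∀ s j, Φ s j = ∑ i, Z s i * Φ (c i) j) (hμ : ∀ s, 0 ≤ μ s)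
    (hv : bellman γ P r v = v) :
    |VLRALP γ P r Φ c μ - ∑ s, μ s * v s| ≤ (∑ s, μ s) * (2 / (1 - γ)) * epsApprox Φ v := by
  have hconst : 0 ≤ (∑ s, μ s) * (2 / (1 - γ)) :=
    mul_nonneg (Finset.sum_nonneg fun s _ => hμ s) (div_nonneg zero_le_two (sub_pos.2 hγ1).le)
  rw [epsApprox, Real.mul_iInf_of_nonneg hconst]
  refine le_ciInf fun θ => ?_
  have hθ (s : S) : |v s - phiDot Φ θ s| ≤ ⨆ s, |v s - phiDot Φ θ s| :=
    le_ciSup (Set.finite_range fun s => |v s - phiDot Φ θ s|).bddAbove s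
  rw [mul_assoc, div_mul_eq_mul_div]
  exact abs_VLRALP_sub_le_of_abs_sub_le hγ0 hγ1 hP hη hZ hΦ hμ hv hθ

end LRALP

theorem qdagger_close_to_qstar_general
    {S A : Type} [Fintype S] [Fintype A] [DecidableEq S]
    {d m : ℕ} (γ : ℝ) (hγ0 : 0 ≤ γ) (hγ1 : γ < 1)
    (P : S → A → S → ℝ) (hP0 : ∀ s a s', 0 ≤ P s a s')
    (hP1 : ∀ s a, ∑ s', P s a s' = 1)
    (r : S → A → ℝ)
    (Φ : S → Fin d → ℝ) (hfeat : ∃ η : Fin d → ℝ, ∀ s, phiDot Φ η s = 1)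
    (c : Fin m → S)
    (hcore : ∃ Z : S → Fin m → ℝ, (∀ s i, 0 ≤ Z s i) ∧
      ∀ s j, Φ s j = ∑ i, Z s i * Φ (c i) j)
    (s₀ : S)
    (π : A → ℝ) (hπ0 : ∀ a, 0 ≤ π a) (hπ1 : ∑ a, π a = 1) :
    |((∑ a, π a * r s₀ a) +
        VLRALP γ P r Φ c (fun s => γ * ∑ a, π a * P s₀ a s)) -
      ∑ a, π a * qstar γ P r s₀ a| ≤
      2 * γ * epsApprox Φ (vstar γ P r) / (1 - γ) := by
  have : Nonempty A := not_isEmpty_iff.1 fun _ => by simp at hπ1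
  obtain ⟨η, hη⟩ := hfeat
  obtain ⟨Z, hZ, hΦ⟩ := hcore
  have hP (s : S) (a : A) : P s a ∈ stdSimplex ℝ S := ⟨hP0 s a, hP1 s a⟩
  -- Playing `π` in every state turns the distribution `μ_π` into the row `s₀` of `Ppi`.
  obtain ⟨hμ0, hμ1⟩ : (fun s => ∑ a, π a * P s₀ a s) ∈ stdSimplex ℝ S :=
    Ppi_mem_stdSimplex (π := fun _ => π) hP ⟨fun _ => hπ0, fun _ => hπ1⟩ s₀
  have hq : ∑ a, π a * qstar γ P r s₀ a =
      ∑ a, π a * r s₀ a + γ * ∑ s, (∑ a, π a * P s₀ a s) * vstar γ P r s :=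
    policyBackup_eq_rpi_add (π := fun _ => π) (vstar γ P r) s₀
  have hV := abs_VLRALP_sub_le hγ0 hγ1 hP hη hZ hΦ (fun s => mul_nonneg hγ0 (hμ0 s))
    (bellman_vstar (r := r) hγ0 hγ1 hP)
  simp only [mul_assoc, ← Finset.mul_sum, hμ1, mul_one] at hV
  rw [hq, add_sub_add_left_eq_sub]
  exact hV.trans_eq (by ring)

/-- `|q†(π) − q*(s₀,π)| ≤ 10γ ε_approx/(1−γ)` for all `π ∈ Δ_𝒜`. -/
theorem qdagger_close_to_qstar
    {S A : Type} [Fintype S] [Fintype A] [DecidableEq S] [Nonempty S] [Nonempty A]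
    {d m : ℕ} (γ : ℝ) (hγ0 : 0 ≤ γ) (hγ1 : γ < 1)
    (P : S → A → S → ℝ) (hP0 : ∀ s a s', 0 ≤ P s a s')
    (hP1 : ∀ s a, ∑ s', P s a s' = 1)
    (r : S → A → ℝ)
    (Φ : S → Fin d → ℝ) (hfeat : ∃ η : Fin d → ℝ, ∀ s, phiDot Φ η s = 1)
    (c : Fin m → S) (hc : Function.Injective c)
    (hcore : ∃ Z : S → Fin m → ℝ, (∀ s i, 0 ≤ Z s i) ∧
      ∀ s j, Φ s j = ∑ i, Z s i * Φ (c i) j)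
    (s₀ : S)
    (π : A → ℝ) (hπ0 : ∀ a, 0 ≤ π a) (hπ1 : ∑ a, π a = 1) :
    |((∑ a, π a * r s₀ a) +
        VLRALP γ P r Φ c (fun s => γ * ∑ a, π a * P s₀ a s)) -
      ∑ a, π a * qstar γ P r s₀ a| ≤
      10 * γ * epsApprox Φ (vstar γ P r) / (1 - γ) := by
  have h := qdagger_close_to_qstar_general γ hγ0 hγ1 P hP0 hP1 r Φ hfeat c hcore s₀ π hπ0 hπ1
  exact h.trans (by gcongr; exacts [epsApprox_nonneg Φ _, by norm_num])

end MDPPlan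
end

section
/- Let h: ℝ_+^n → ℝ be the unnormalized negentropy h(x) = Σ_i x_i(log x_i − 1) on n = (1+m)A coordinates indexed by the actions at a planning state s₀ and by core state–action pairs, γ ∈ (0,1), and h_γ(λ) := h((1−γ)λ)/(1−γ)². Let λ₀ assign 1/A to each coordinate (s₀,a), a ∈ 𝒜, and γ/((1−γ)mA) to each core coordinate (s,a) ∈ 𝒮*×𝒜; let λ̄ = e_{(s₀,a)} ⊕ (γ/(1−γ))·e_{(s',a')} for some fixed a ∈ 𝒜 and (s',a') ∈ 𝒮*×𝒜. Then the Bregman divergence satisfies D_{h_γ}(λ̄, λ₀) = (log A + γ log m)/(1−γ)². -/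
open scoped BigOperators

/-- The scaled unnormalized negentropy `h_γ(λ) = h((1−γ)λ)/(1−γ)²`, where
`h(x) = Σ_i x_i (log x_i − 1)`. -/
noncomputable def hGamma {ι : Type} [Fintype ι] (γ : ℝ) (lam : ι → ℝ) : ℝ :=
  (∑ i, ((1 - γ) * lam i) * (Real.log ((1 - γ) * lam i) - 1)) / (1 - γ) ^ 2

/-!
Scaled by `1 - γ`, both the center and the extreme point have total mass `1`, so the linear terms of
the Bregman divergence cancel and it becomes a relative entropy
`(∑ i, x i * log (x i / y i)) / (1 - γ)`. The extreme point `x` charges only two coordinates: with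
weight `1` one where `x / y` is the number of actions, and with weight `γ / (1 - γ)` one where
`x / y` is the number of core state-action pairs.
-/

section Bregman

open Real

theorem mul_log_mul_sub_log_mul {c s t : ℝ} (hc : c ≠ 0) (hst : s ≠ 0 → t ≠ 0) :
    s * (log (c * s) - log (c * t)) = s * log (s / t) := by
  rcases eq_or_ne s 0 with rfl | hs
  · simp only [zero_mul]
  · have ht : t ≠ 0 := hst hs
    rw [← log_div (mul_ne_zero hc hs) (mul_ne_zero hc ht), mul_div_mul_left _ _ hc]

variable {ι : Type} [Fintype ι] {γ : ℝ} {x y : ι → ℝ}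

/-- The Bregman divergence `D_{h_γ}(x, y)` of `hGamma γ`, with the gradient of `hGamma γ` written
out as `∇h_γ(y)_i = log ((1 - γ) * y i) / (1 - γ)`. This is the gradient only where all
`(1 - γ) * y i` are positive; elsewhere the value depends on the conventions for `Real.log`. -/
noncomputable def hGammaBregman (γ : ℝ) (x y : ι → ℝ) : ℝ :=
  hGamma γ x - hGamma γ y - ∑ i, log ((1 - γ) * y i) / (1 - γ) * (x i - y i)

theorem hGammaBregman_eq_sum (hγ : γ ≠ 1) :
    hGammaBregman γ x y =
      (∑ i, (x i * (log ((1 - γ) * x i) - log ((1 - γ) * y i)) - (x i - y i))) / (1 - γ) := by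
  have hγ' : 1 - γ ≠ 0 := sub_ne_zero.mpr hγ.symm
  simp only [hGammaBregman, hGamma, Finset.sum_div, ← Finset.sum_sub_distrib]
  refine Finset.sum_congr rfl fun i _ => ?_
  field_simp
  ring

theorem hGammaBregman_eq_sum_mul_log_div (hγ : γ ≠ 1) (hxy : ∀ i, x i ≠ 0 → y i ≠ 0)
    (hsum : ∑ i, x i = ∑ i, y i) :
    hGammaBregman γ x y = (∑ i, x i * log (x i / y i)) / (1 - γ) := by
  have hγ' : 1 - γ ≠ 0 := sub_ne_zero.mpr hγ.symm
  simp only [hGammaBregman_eq_sum hγ, Finset.sum_sub_distrib, hsum, sub_self, sub_zero,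
    mul_log_mul_sub_log_mul hγ' (hxy _)]

end Bregman

section Occupancy

open Real

variable {S α : Type}

section Center

variable [Fintype S] [Fintype α]

/-- The center `λ₀`: uniform of mass `1` on the block of the planning state `none`, and uniform of
mass `γ / (1 - γ)` on the block of the core states `some s`. -/
noncomputable def occupancyCenter (γ : ℝ) : Option S × α → ℝ := fun p =>
  if p.1 = none then 1 / (Fintype.card α : ℝ)
  else γ / ((1 - γ) * Fintype.card S * Fintype.card α)

theorem occupancyCenter_none (γ : ℝ) (a : α) :
    occupancyCenter γ ((none : Option S), a) = 1 / (Fintype.card α : ℝ) :=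
  if_pos rfl

theorem occupancyCenter_some (γ : ℝ) (s : S) (a : α) :
    occupancyCenter γ (some s, a) = γ / ((1 - γ) * Fintype.card S * Fintype.card α) :=
  if_neg (Option.some_ne_none s)

theorem sum_occupancyCenter [Nonempty S] [Nonempty α] (γ : ℝ) :
    ∑ p : Option S × α, occupancyCenter γ p = 1 + γ / (1 - γ) := by
  have hS : (Fintype.card S : ℝ) ≠ 0 := Nat.cast_ne_zero.mpr Fintype.card_ne_zero
  have hα : (Fintype.card α : ℝ) ≠ 0 := Nat.cast_ne_zero.mpr Fintype.card_ne_zero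
  simp only [Fintype.sum_prod_type, Fintype.sum_option, occupancyCenter_none,
    occupancyCenter_some, Finset.sum_const, Finset.card_univ, nsmul_eq_mul]
  field_simp

end Center

section Extreme

variable [DecidableEq S] [DecidableEq α]

/-- The extreme point `λ̄ = e_{(s₀, a₀)} ⊕ (γ / (1 - γ)) e_{(s, a)}`, where `none` stands for the
planning state `s₀`. -/
noncomputable def occupancyExtreme (γ : ℝ) (a₀ : α) (s : S) (a : α) : Option S × α → ℝ := fun p =>
  if p = (none, a₀) then 1 else if p = (some s, a) then γ / (1 - γ) else 0

theorem occupancyExtreme_none (γ : ℝ) (a₀ : α) (s : S) (a : α) :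
    occupancyExtreme γ a₀ s a (none, a₀) = 1 :=
  if_pos rfl

theorem occupancyExtreme_some (γ : ℝ) (a₀ : α) (s : S) (a : α) :
    occupancyExtreme γ a₀ s a (some s, a) = γ / (1 - γ) := by
  simp [occupancyExtreme]

theorem sum_occupancyExtreme_mul [Fintype S] [Fintype α] (γ : ℝ) (a₀ : α) (s : S) (a : α)
    (f : Option S × α → ℝ) :
    ∑ p, occupancyExtreme γ a₀ s a p * f p = f (none, a₀) + γ / (1 - γ) * f (some s, a) := by
  rw [Fintype.sum_eq_add (none, a₀) (some s, a) (by simp)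
      fun p hp => by simp [occupancyExtreme, hp.1, hp.2],
    occupancyExtreme_none, occupancyExtreme_some, one_mul]

theorem sum_occupancyExtreme [Fintype S] [Fintype α] (γ : ℝ) (a₀ : α) (s : S) (a : α) :
    ∑ p, occupancyExtreme γ a₀ s a p = 1 + γ / (1 - γ) := by
  simpa only [mul_one] using sum_occupancyExtreme_mul γ a₀ s a fun _ => 1

end Extreme

section Divergence

variable [Fintype S] [Fintype α] {γ : ℝ}

theorem occupancyCenter_pos [Nonempty S] [Nonempty α] (hγ0 : 0 < γ) (hγ1 : γ < 1)
    (p : Option S × α) : 0 < occupancyCenter γ p := by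
  have hγ' : 0 < 1 - γ := sub_pos.mpr hγ1
  have hS : 0 < (Fintype.card S : ℝ) := Nat.cast_pos.mpr Fintype.card_pos
  have hα : 0 < (Fintype.card α : ℝ) := Nat.cast_pos.mpr Fintype.card_pos
  unfold occupancyCenter
  split_ifs
  · exact one_div_pos.mpr hα
  · exact div_pos hγ0 (mul_pos (mul_pos hγ' hS) hα)

variable [DecidableEq S] [DecidableEq α]

theorem occupancyExtreme_div_occupancyCenter_none (γ : ℝ) (a₀ : α) (s : S) (a : α) :
    occupancyExtreme γ a₀ s a (none, a₀) / occupancyCenter γ ((none : Option S), a₀) =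
      Fintype.card α := by
  rw [occupancyExtreme_none, occupancyCenter_none, one_div_one_div]

theorem occupancyExtreme_div_occupancyCenter_some (hγ0 : γ ≠ 0) (hγ1 : γ ≠ 1)
    (a₀ : α) (s : S) (a : α) :
    occupancyExtreme γ a₀ s a (some s, a) / occupancyCenter γ (some s, a) =
      Fintype.card S * Fintype.card α := by
  have hγ' : 1 - γ ≠ 0 := sub_ne_zero.mpr hγ1.symm
  rw [occupancyExtreme_some, occupancyCenter_some]
  field_simp

theorem sum_occupancyExtreme_mul_log_div (hγ0 : γ ≠ 0) (hγ1 : γ ≠ 1)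
    (a₀ : α) (s : S) (a : α) :
    ∑ p, occupancyExtreme γ a₀ s a p *
        log (occupancyExtreme γ a₀ s a p / occupancyCenter γ p) =
      (log (Fintype.card α) + γ * log (Fintype.card S)) / (1 - γ) := by
  have : Nonempty S := ⟨s⟩
  have : Nonempty α := ⟨a⟩
  have hγ' : 1 - γ ≠ 0 := sub_ne_zero.mpr hγ1.symm
  have hS : (Fintype.card S : ℝ) ≠ 0 := Nat.cast_ne_zero.mpr Fintype.card_ne_zero
  have hα : (Fintype.card α : ℝ) ≠ 0 := Nat.cast_ne_zero.mpr Fintype.card_ne_zero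
  rw [sum_occupancyExtreme_mul, occupancyExtreme_div_occupancyCenter_none,
    occupancyExtreme_div_occupancyCenter_some hγ0 hγ1, log_mul hS hα]
  field_simp
  ring

theorem bregman_divergence_center_to_extreme_general (hγ0 : 0 < γ) (hγ1 : γ < 1)
    (a₀ : α) (s : S) (a : α) :
    hGammaBregman γ (occupancyExtreme γ a₀ s a) (occupancyCenter γ) =
      (log (Fintype.card α) + γ * log (Fintype.card S)) / (1 - γ) ^ 2 := by
  have : Nonempty S := ⟨s⟩
  have : Nonempty α := ⟨a⟩
  have hsum : ∑ p, occupancyExtreme γ a₀ s a p = ∑ p : Option S × α, occupancyCenter γ p := by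
    rw [sum_occupancyExtreme, sum_occupancyCenter]
  rw [hGammaBregman_eq_sum_mul_log_div hγ1.ne (fun p _ => (occupancyCenter_pos hγ0 hγ1 p).ne') hsum,
    sum_occupancyExtreme_mul_log_div hγ0.ne' hγ1.ne, div_div, ← sq]

end Divergence

end Occupancy

/-- the Bregman divergence `D_{h_γ}(λ̄, λ₀)` between the extreme point
`λ̄ = e_{(s₀,a₀)} ⊕ (γ/(1−γ)) e_{(s',a')}` and the center
`λ₀ = (1/A on the s₀-block) ⊕ (γ/((1−γ)mA) on the core block)` equals
`(log A + γ log m)/(1−γ)²`.  Coordinates are indexed by `Option (Fin m) × Fin A`,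
where `none` stands for the planning state `s₀` and `some i` for the `i`-th core state;
`∇h_γ(λ)_p = log((1−γ)λ_p)/(1−γ)`. -/
theorem bregman_divergence_center_to_extreme
    {m A : ℕ} (hm : 0 < m) (hA : 0 < A)
    (γ : ℝ) (hγ0 : 0 < γ) (hγ1 : γ < 1)
    (a₀ : Fin A) (i' : Fin m) (a' : Fin A) :
    let lam0 : Option (Fin m) × Fin A → ℝ :=
      fun p => if p.1 = none then 1 / (A : ℝ) else γ / ((1 - γ) * m * A)
    let lamBar : Option (Fin m) × Fin A → ℝ :=
      fun p => if p = (none, a₀) then 1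
        else if p = (some i', a') then γ / (1 - γ) else 0
    hGamma γ lamBar - hGamma γ lam0 -
        (∑ p : Option (Fin m) × Fin A,
          (Real.log ((1 - γ) * lam0 p) / (1 - γ)) * (lamBar p - lam0 p)) =
      (Real.log A + γ * Real.log m) / (1 - γ) ^ 2 := by
  simpa only [hGammaBregman, hGamma, occupancyCenter, occupancyExtreme, Fintype.card_fin] using
    bregman_divergence_center_to_extreme_general hγ0 hγ1 a₀ i' a'
end
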